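/- arXiv:2210.03545 — 2 statements merged into one kernel-verified Lean document; each statement's English description precedes it below -/
import Mathlib

section
/- There exists a constant c' > 0 such that for all integers n ≥ 2, gr(Γ_{2,2}, K_n) ≤ 2^{c'·n^{2/3}·log n}; that is, if N ≥ 2^{c'·n^{2/3}·log n}, then every red/blue edge-coloring of Γ_{N,N} contains a red rectangle or a blue K_n. -/
/-- Adjacency in the grid graph `K_m □ K_n`. -/
def GridAdj {m n : ℕ} (p q : Fin m × Fin n) : Prop :=
  (p.1 = q.1 ∧ p.2 ≠ q.2) ∨ (p.1 ≠ q.1 ∧ p.2 = q.2)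

/-- A red rectangle in an edge-coloring of `Γ_{N,M}` (red = `true`). -/
def HasRedRect (N M : ℕ) (χ : Sym2 (Fin N × Fin M) → Bool) : Prop :=
  ∃ x x' : Fin N, ∃ y y' : Fin M, x ≠ x' ∧ y ≠ y' ∧
    χ s((x, y), (x', y)) = true ∧ χ s((x, y'), (x', y')) = true ∧
    χ s((x, y), (x, y')) = true ∧ χ s((x', y), (x', y')) = true

/-- A blue `K_n` in an edge-coloring of `Γ_{N,M}` (blue = `false`). -/
def HasBlueGridClique (N M n : ℕ) (χ : Sym2 (Fin N × Fin M) → Bool) : Prop :=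
  ∃ S : Finset (Fin N × Fin M), S.card = n ∧
    ∀ p ∈ S, ∀ q ∈ S, p ≠ q → GridAdj p q ∧ χ s(p, q) = false

/-!
Assume that there is no blue `K_n`. By Ramsey's theorem every row contains a red clique on `t` of
the first `n ^ t` columns, and by pigeonhole at least `N / n ^ (t ^ 2)` rows share the same `t`
columns. Without red rectangles, the red graphs which these columns induce on the shared rows are
edge-disjoint, so one of them has edge density at most `1 / t`. It has no independent set of size
`n`, and no clique of size `n` either, because such a clique would be blue in another of the
columns. The Erdős–Szemerédi theorem, that a sparse graph without large cliques and large
independent sets is small, bounds the number of shared rows by `n ^ O(n / t)`. The choice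
`t ≈ n ^ (1 / 3)` balances the exponents `t ^ 2` and `n / t`.
-/

section

open Finset SimpleGraph

variable {V ι α β : Type*}

theorem card_le_two_mul_card_filter_le (s : Finset α) (f : α → ℕ) {k : ℕ}
    (h : 2 * ∑ a ∈ s, f a ≤ k * #s) : #s ≤ 2 * #{a ∈ s | f a ≤ k} := by
  have hsplit : #{a ∈ s | f a ≤ k} + #{a ∈ s | ¬f a ≤ k} = #s :=
    card_filter_add_card_filter_not _
  have hmarkov : #{a ∈ s | ¬f a ≤ k} * (k + 1) ≤ ∑ a ∈ s, f a :=
    calc #{a ∈ s | ¬f a ≤ k} * (k + 1) ≤ ∑ a ∈ s with ¬f a ≤ k, f a :=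
          card_nsmul_le_sum _ f _ fun a ha ↦ not_le.mp (mem_filter.mp ha).2
      _ ≤ ∑ a ∈ s, f a := sum_le_sum_of_subset (filter_subset _ _)
  have hfew : 2 * #{a ∈ s | ¬f a ≤ k} ≤ #s :=
    Nat.le_of_mul_le_mul_right (by linarith) k.succ_pos
  omega

theorem card_filter_powerset_card_le_le_pow (I : Finset α) (s : ℕ) :
    #{A ∈ I.powerset | #A ≤ s} ≤ (#I + 1) ^ s := by
  classical
  have hsub : {A ∈ I.powerset | #A ≤ s} ⊆ (range (s + 1)).biUnion (I.powersetCard ·) := by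
    intro A hA
    simpa [Nat.lt_succ_iff, and_comm] using hA
  calc #{A ∈ I.powerset | #A ≤ s}
      ≤ ∑ j ∈ range (s + 1), #(I.powersetCard j) := (card_le_card hsub).trans card_biUnion_le
    _ ≤ ∑ j ∈ range (s + 1), #I ^ j * 1 ^ (s - j) * s.choose j := by
        refine sum_le_sum fun j hj ↦ ?_
        rw [card_powersetCard, one_pow, mul_one]
        exact (Nat.choose_le_pow _ _).trans
          (Nat.le_mul_of_pos_right _ (Nat.choose_pos (mem_range_succ_iff.mp hj)))
    _ = (#I + 1) ^ s := (add_pow _ _ _).symm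

theorem exists_isClique_forall_exists_not_adj (G : SimpleGraph V) (S : Finset V) :
    ∃ K ⊆ S, G.IsClique K ∧ ∀ w ∈ S, ∃ v ∈ K, ¬G.Adj v w := by
  classical
  obtain ⟨K, hK, hmax⟩ := exists_max_image (S.powerset.filter fun K : Finset V ↦ G.IsClique K)
    card ⟨∅, by simp⟩
  simp only [mem_filter, mem_powerset] at hK hmax
  refine ⟨K, hK.1, hK.2, fun w hw ↦ ?_⟩
  by_contra! hadj
  have hwK : w ∉ K := fun h ↦ G.irrefl (hadj w h)
  have hclique : G.IsClique ↑(insert w K) := by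
    rw [coe_insert, isClique_insert]
    exact ⟨hK.2, fun v hv _ ↦ (hadj v hv).symm⟩
  have hle := hmax (insert w K) ⟨insert_subset hw hK.1, hclique⟩
  rw [card_insert_of_notMem hwK] at hle
  omega

theorem exists_subset_forall_compl_adj {G : SimpleGraph V} {n d : ℕ} {S : Finset V}
    (hG : G.CliqueFree n) (hd : 0 < d) (hS : n * d ≤ #S) :
    ∃ v ∈ S, ∃ S' ⊆ S, d ≤ #S' ∧ ∀ w ∈ S', Gᶜ.Adj v w := by
  classical
  obtain ⟨K, hKS, hK, hdom⟩ := exists_isClique_forall_exists_not_adj G S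
  have hKn : #K < n := by
    by_contra! hn
    exact hG.mono hn K ⟨hK, rfl⟩
  obtain ⟨v, hv, hlarge⟩ : ∃ v ∈ K, d < #{w ∈ S | ¬G.Adj v w} := by
    by_contra! hsmall
    have hcover : S ⊆ K.biUnion fun v ↦ {w ∈ S | ¬G.Adj v w} := by
      intro w hw
      simpa [hw] using hdom w hw
    have hle := (card_le_card hcover).trans (card_biUnion_le_card_mul _ _ _ hsmall)
    have hlt : #K * d < n * d := Nat.mul_lt_mul_of_pos_right hKn hd
    omega
  refine ⟨v, hKS hv, {w ∈ S | ¬G.Adj v w}.erase v, ?_, ?_, ?_⟩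
  · exact (erase_subset _ _).trans (filter_subset _ _)
  · exact (Nat.le_sub_one_of_lt hlarge).trans pred_card_le_card_erase
  · intro w hw
    rw [mem_erase, mem_filter] at hw
    exact (G.compl_adj v w).mpr ⟨hw.1.symm, hw.2.2⟩

/-- Ramsey's theorem, in the form `R(n, k) ≤ n ^ k`. -/
theorem exists_subset_isNIndepSet_of_cliqueFree {G : SimpleGraph V} {n k : ℕ} {S : Finset V}
    (hG : G.CliqueFree n) (hS : n ^ k ≤ #S) : ∃ J ⊆ S, G.IsNIndepSet k J := by
  classical
  induction k generalizing S with
  | zero => exact ⟨∅, empty_subset S, by simp [isNIndepSet_iff]⟩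
  | succ k ih =>
    have hn : 0 < n := Nat.pos_of_ne_zero fun h ↦ not_cliqueFree_zero (h ▸ hG)
    obtain ⟨v, hv, S', hS'S, hS', hadj⟩ :=
      exists_subset_forall_compl_adj hG (pow_pos hn k) (pow_succ' n k ▸ hS)
    obtain ⟨J, hJS', hJ⟩ := ih hS'
    rw [← isNClique_compl] at hJ
    exact ⟨insert v J, insert_subset hv (hJS'.trans hS'S),
      G.isNClique_compl.mp (hJ.insert fun w hw ↦ hadj w (hJS' hw))⟩

/-- The part of the independent set `I` that is blocked by adding `w`: the trace on `I` of the
closed neighbourhood of `w`. Closed rather than open, so that it is nonempty for `w ∈ I`. -/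
noncomputable def closedTrace (G : SimpleGraph V) (I : Finset V) (w : V) : Finset V :=
  open scoped Classical in {v ∈ I | v = w ∨ G.Adj w v}

theorem closedTrace_subset (G : SimpleGraph V) (I : Finset V) (w : V) : closedTrace G I w ⊆ I := by
  classical exact filter_subset _ _

theorem card_closedTrace_le (G : SimpleGraph V) [DecidableRel G.Adj] (I : Finset V) (w : V) :
    #(closedTrace G I w) ≤ #{v ∈ I | G.Adj w v} + 1 := by
  classical
  have hsub : closedTrace G I w ⊆ insert w {v ∈ I | G.Adj w v} := by
    intro v hv
    simp only [closedTrace, mem_filter, mem_insert] at hv ⊢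
    tauto
  exact (card_le_card hsub).trans (card_insert_le _ _)

theorem card_le_card_of_closedTrace_subset [Finite V] {G : SimpleGraph V} {I J A : Finset V}
    (hI : G.IsMaximumIndepSet I) (hJ : G.IsIndepSet J) (hA : ∀ w ∈ J, closedTrace G I w ⊆ A) :
    #J ≤ #A := by
  classical
  have hfar : ∀ w ∈ J, ∀ v ∈ I \ A, v ≠ w ∧ ¬G.Adj w v := by
    intro w hw v hv
    rw [mem_sdiff] at hv
    have hvw : v ∉ closedTrace G I w := fun h ↦ hv.2 (hA w hw h)
    simpa [closedTrace, hv.1] using hvw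
  have hdisj : Disjoint J (I \ A) :=
    Finset.disjoint_left.mpr fun w hwJ hwI ↦ (hfar w hwJ w hwI).1 rfl
  have hindep : G.IsIndepSet ↑(J ∪ I \ A) := by
    rw [coe_union, isIndepSet_iff, Set.pairwise_union]
    refine ⟨hJ, hI.isIndepSet.mono (by simp), fun w hw v hv _ ↦ ?_⟩
    have hwv := (hfar w hw v hv).2
    exact ⟨hwv, fun h ↦ hwv h.symm⟩
  have hmax := hI.maximum _ hindep
  rw [card_union_of_disjoint hdisj] at hmax
  have hsdiff := le_card_sdiff A I
  omega

theorem card_le_two_mul_card_filter_card_adj_le [Fintype V] {G : SimpleGraph V}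
    [DecidableRel G.Adj] {I : Finset V} {s : ℕ}
    (h : 2 * ∑ v ∈ I, G.degree v ≤ s * Fintype.card V) :
    Fintype.card V ≤ 2 * #{w | #{v ∈ I | G.Adj w v} ≤ s} := by
  refine card_le_two_mul_card_filter_le univ _ ?_
  have hdouble : ∑ w, #{v ∈ I | G.Adj w v} = ∑ v ∈ I, #{w | G.Adj w v} :=
    sum_card_bipartiteAbove_eq_sum_card_bipartiteBelow G.Adj
  simpa [hdouble, ← card_neighborFinset_eq_degree, neighborFinset_eq_filter, G.adj_comm] using h

theorem card_lt_of_isIndepSet_of_indepSetFree {G : SimpleGraph V} {I : Finset V} {m : ℕ}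
    (hI : G.IsIndepSet I) (hG : G.IndepSetFree m) : #I < m := by
  by_contra! hm
  exact (G.cliqueFree_compl.mpr hG).mono hm I ⟨G.isClique_compl.mpr hI, rfl⟩

-- Most vertices have few neighbours in a maximum independent set `I`, so many of them have the same
-- small closed trace `A` on `I`. By exchange for `A`, these contain no independent set larger than
-- `A`, and Ramsey's theorem bounds their number.
theorem card_lt_of_forall_degree_le [Fintype V] {G : SimpleGraph V} [DecidableRel G.Adj]
    {m n s : ℕ} (hclique : G.CliqueFree n) (hindep : G.IndepSetFree m)
    (hdeg : ∀ v, 2 * m * G.degree v ≤ s * Fintype.card V) :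
    Fintype.card V < 2 * (m ^ (s + 1) * n ^ (s + 2)) := by
  by_contra! hbig
  obtain ⟨I, hI⟩ := G.maximumIndepSet_exists
  have hIm : #I < m := card_lt_of_isIndepSet_of_indepSetFree hI.isIndepSet hindep
  have hsum : 2 * ∑ v ∈ I, G.degree v ≤ s * Fintype.card V := by
    refine Nat.le_of_mul_le_mul_left ?_ (Nat.zero_lt_of_lt hIm)
    calc m * (2 * ∑ v ∈ I, G.degree v) = ∑ v ∈ I, 2 * m * G.degree v := by
          rw [← mul_sum]
          ring
      _ ≤ #I * (s * Fintype.card V) := sum_le_card_nsmul _ _ _ fun v _ ↦ hdeg v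
      _ ≤ m * (s * Fintype.card V) := by gcongr
  set Z : Finset V := {w | #{v ∈ I | G.Adj w v} ≤ s}
  have hZ : m ^ (s + 1) * n ^ (s + 2) ≤ #Z := by
    have hhalf : Fintype.card V ≤ 2 * #Z := card_le_two_mul_card_filter_card_adj_le hsum
    omega
  set P : Finset (Finset V) := {A ∈ I.powerset | #A ≤ s + 1}
  have hmaps : ∀ w ∈ Z, closedTrace G I w ∈ P := fun w hw ↦
    mem_filter.mpr ⟨mem_powerset.mpr (closedTrace_subset G I w),
      (card_closedTrace_le G I w).trans (Nat.succ_le_succ (mem_filter.mp hw).2)⟩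
  have hP : #P ≤ m ^ (s + 1) :=
    (card_filter_powerset_card_le_le_pow I (s + 1)).trans (Nat.pow_le_pow_left hIm _)
  classical
  obtain ⟨A, hA, hfiber⟩ := exists_le_card_fiber_of_mul_le_card_of_maps_to hmaps ⟨∅, by simp [P]⟩
    ((Nat.mul_le_mul_right _ hP).trans hZ)
  obtain ⟨J, hJ, hJindep⟩ := exists_subset_isNIndepSet_of_cliqueFree hclique hfiber
  have hJA : #J ≤ #A := card_le_card_of_closedTrace_subset hI hJindep.isIndepSet
    fun w hw ↦ (mem_filter.mp (hJ hw)).2.subset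
  have hAs : #A ≤ s + 1 := (mem_filter.mp hA).2
  have hJcard := hJindep.card_eq
  omega

theorem indepSetFree_of_embedding {G : SimpleGraph α} {H : SimpleGraph β} {n : ℕ} (f : G ↪g H)
    (h : H.IndepSetFree n) : G.IndepSetFree n := by
  rw [← cliqueFree_compl] at h ⊢
  exact h.comap (Embedding.complEquiv f).isContained

/-- The **Erdős–Szemerédi theorem**. -/
theorem card_lt_of_card_edgeFinset_le [Fintype V] {G : SimpleGraph V} [DecidableRel G.Adj]
    {m n s : ℕ} (hclique : G.CliqueFree n) (hindep : G.IndepSetFree m)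
    (hsparse : 16 * m * #G.edgeFinset ≤ s * Fintype.card V ^ 2) :
    Fintype.card V < 4 * (m ^ (s + 1) * n ^ (s + 2)) := by
  set N := Fintype.card V
  set e := #G.edgeFinset
  set W : Finset V := {v | N * G.degree v ≤ 4 * e}
  have hW : N ≤ 2 * #W := by
    refine card_le_two_mul_card_filter_le univ _ ?_
    rw [← mul_sum, G.sum_degrees_eq_twice_card_edges, card_univ]
    exact le_of_eq (by ring)
  have hdeg (v : W) : 2 * m * (G.induce W).degree v ≤ s * Fintype.card W := by
    have hv : N * G.degree v ≤ 4 * e := (mem_filter.mp v.2).2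
    have hN : 0 < N := Fintype.card_pos_iff.mpr ⟨v⟩
    rw [Fintype.card_coe]
    refine Nat.le_of_mul_le_mul_left ?_ (Nat.mul_pos two_pos hN)
    calc 2 * N * (2 * m * (G.induce W).degree v)
        ≤ 2 * N * (2 * m * G.degree v) := by
          gcongr
          exact (Embedding.induce (G := G) (W : Set V)).toCopy.degree_le v
      _ = 4 * m * (N * G.degree v) := by ring
      _ ≤ 4 * m * (4 * e) := by gcongr
      _ = 16 * m * e := by ring
      _ ≤ s * N ^ 2 := hsparse
      _ ≤ s * (N * (2 * #W)) := by
        rw [sq]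
        gcongr
      _ = 2 * N * (s * #W) := by ring
  have hWcard : Fintype.card W < 2 * (m ^ (s + 1) * n ^ (s + 2)) :=
    card_lt_of_forall_degree_le (hclique.comap (Embedding.induce (W : Set V)).isContained)
      (indepSetFree_of_embedding (Embedding.induce (W : Set V)) hindep) hdeg
  rw [Fintype.card_coe] at hWcard
  omega

theorem cliqueFree_of_disjoint_of_indepSetFree {G H : SimpleGraph V} {n : ℕ} (hGH : Disjoint G H)
    (hH : H.IndepSetFree n) : G.CliqueFree n := fun K hK ↦
  hH K ⟨fun _ hu _ hv huv ↦ SimpleGraph.disjoint_left.mp hGH _ _ (hK.isClique hu hv huv),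
    hK.card_eq⟩

theorem exists_card_mul_card_edgeFinset_le_choose_two [Fintype V] {G : ι → SimpleGraph V}
    [∀ i, DecidableRel (G i).Adj] {T : Finset ι} (hT : T.Nonempty)
    (hG : (T : Set ι).PairwiseDisjoint G) :
    ∃ i ∈ T, #T * #(G i).edgeFinset ≤ (Fintype.card V).choose 2 := by
  classical
  refine exists_le_of_sum_le hT ?_
  rw [← mul_sum, sum_const, smul_eq_mul]
  gcongr
  rw [← card_biUnion fun i hi j hj hij ↦ disjoint_edgeFinset.mpr (hG hi hj hij),
    ← card_edgeFinset_top_eq_card_choose_two]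
  exact card_le_card (biUnion_subset.mpr fun i _ ↦ edgeFinset_mono le_top)

theorem card_lt_of_pairwiseDisjoint_of_indepSetFree [Fintype V] {G : ι → SimpleGraph V}
    {T : Finset ι} {n s : ℕ} (hT : 2 ≤ #T) (hG : (T : Set ι).PairwiseDisjoint G)
    (hindep : ∀ i ∈ T, (G i).IndepSetFree n) (hs : 8 * n ≤ s * #T) :
    Fintype.card V < 4 * n ^ (2 * s + 3) := by
  classical
  obtain ⟨i, hi, hedges⟩ :=
    exists_card_mul_card_edgeFinset_le_choose_two (card_pos.mp (by omega)) hG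
  obtain ⟨j, hj, hji⟩ := exists_mem_ne hT i
  have hclique : (G i).CliqueFree n :=
    cliqueFree_of_disjoint_of_indepSetFree (hG hi hj hji.symm) (hindep j hj)
  have hsparse : 16 * n * #(G i).edgeFinset ≤ s * Fintype.card V ^ 2 :=
    calc 16 * n * #(G i).edgeFinset = 2 * (8 * n) * #(G i).edgeFinset := by ring
      _ ≤ 2 * (s * #T) * #(G i).edgeFinset := by gcongr
      _ = s * (#T * #(G i).edgeFinset * 2) := by ring
      _ ≤ s * ((Fintype.card V).choose 2 * 2) := by gcongr
      _ ≤ s * Fintype.card V ^ 2 := by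
        gcongr
        rw [Nat.choose_two_right, sq]
        exact (Nat.div_mul_le_self _ _).trans (Nat.mul_le_mul_left _ (Nat.sub_le _ _))
  have hlt := card_lt_of_card_edgeFinset_le hclique (hindep i hi) hsparse
  rwa [← pow_add, show s + 1 + (s + 2) = 2 * s + 3 by ring] at hlt

theorem exists_isClique_of_forall_indepSetFree [Fintype α] [Fintype β] [Nonempty β]
    {G : β → SimpleGraph α} {n t L : ℕ} (hG : ∀ b, (G b).IndepSetFree n)
    (hα : n ^ t ≤ Fintype.card α) (hβ : n ^ (t * t) * L ≤ Fintype.card β) :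
    ∃ T : Finset α, ∃ Y : Finset β, #T = t ∧ L ≤ #Y ∧ ∀ b ∈ Y, (G b).IsClique T := by
  classical
  obtain ⟨S, -, hS⟩ := exists_subset_card_eq (s := (univ : Finset α)) hα
  have hcliques (b : β) : ∃ T ∈ S.powersetCard t, (G b).IsClique T := by
    obtain ⟨T, hTS, hT⟩ :=
      exists_subset_isNIndepSet_of_cliqueFree ((G b).cliqueFree_compl.mpr (hG b)) hS.ge
    rw [isNIndepSet_compl] at hT
    exact ⟨T, mem_powersetCard.mpr ⟨hTS, hT.card_eq⟩, hT.isClique⟩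
  choose f hf hclique using hcliques
  have hchoices : #(S.powersetCard t) ≤ n ^ (t * t) := by
    rw [card_powersetCard, hS, pow_mul]
    exact Nat.choose_le_pow _ _
  obtain ⟨T, hT, hfiber⟩ := exists_le_card_fiber_of_mul_le_card_of_maps_to (s := univ)
    (fun b _ ↦ hf b) ⟨_, hf (Classical.arbitrary β)⟩ ((Nat.mul_le_mul_right L hchoices).trans hβ)
  refine ⟨T, univ.filter (f · = T), (mem_powersetCard.mp hT).2, hfiber, fun b hb ↦ ?_⟩
  exact (mem_filter.mp hb).2 ▸ hclique b

variable {N M n : ℕ} {χ : Sym2 (Fin N × Fin M) → Bool}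

/-- The graph of all red edges of a coloring. The coloring is defined on all pairs of vertices, so
the graph also has the red pairs that are not edges of the grid; these disappear in its restrictions
to rows and columns. -/
def redGraph (χ : Sym2 (Fin N × Fin M) → Bool) : SimpleGraph (Fin N × Fin M) :=
  fromEdgeSet {e | χ e = true}

theorem indepSetFree_comap_redGraph {f : V ↪ Fin N × Fin M}
    (hχ : ¬HasBlueGridClique N M n χ) (hf : ∀ u v, u ≠ v → GridAdj (f u) (f v)) :
    ((redGraph χ).comap f).IndepSetFree n := by
  intro J hJ
  refine hχ ⟨J.map f, by rw [card_map, hJ.card_eq], ?_⟩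
  simp only [mem_map, forall_exists_index, and_imp, forall_apply_eq_imp_iff₂]
  intro u hu v hv huv
  have huv' : u ≠ v := fun h ↦ huv (congrArg f h)
  have hblue := hJ.isIndepSet hu hv huv'
  exact ⟨hf u v huv', by simpa [redGraph, huv'] using hblue⟩

theorem pairwiseDisjoint_comap_redGraph {T : Finset (Fin N)} {Y : Finset (Fin M)}
    (hχ : ¬HasRedRect N M χ) (hrow : ∀ y ∈ Y, ((redGraph χ).comap (·, y)).IsClique T) :
    (T : Set (Fin N)).PairwiseDisjoint fun x ↦ (redGraph χ).comap fun y : Y ↦ (x, (y : Fin M)) := by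
  intro x hx x' hx' hxx'
  refine SimpleGraph.disjoint_left.mpr fun y y' hcol hcol' ↦ hχ ?_
  have hy := hrow y y.2 hx hx' hxx'
  have hy' := hrow y' y'.2 hx hx' hxx'
  simp only [redGraph, comap_adj, fromEdgeSet_adj, Set.mem_ofPred_eq] at hcol hcol' hy hy'
  exact ⟨x, x', y, y', hxx', fun h ↦ hcol.2 (by rw [h]), hy.1, hy'.1, hcol.1, hcol'.1⟩

theorem hasRedRect_or_hasBlueGridClique {s t : ℕ} (hn : 0 < n) (ht : 2 ≤ t) (hst : 8 * n ≤ s * t)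
    (hN : n ^ t ≤ N) (hM : n ^ (t * t) * (4 * n ^ (2 * s + 3)) ≤ M)
    (χ : Sym2 (Fin N × Fin M) → Bool) : HasRedRect N M χ ∨ HasBlueGridClique N M n χ := by
  by_contra! ⟨hrect, hblue⟩
  have : Nonempty (Fin M) := Fin.pos_iff_nonempty.mp (lt_of_lt_of_le (by positivity) hM)
  have hrow (y : Fin M) : ((redGraph χ).comap (·, y)).IndepSetFree n :=
    indepSetFree_comap_redGraph (f := .sectL (Fin N) y) hblue fun _ _ h ↦ .inr ⟨h, rfl⟩
  obtain ⟨T, Y, rfl, hY, hclique⟩ := exists_isClique_of_forall_indepSetFree hrow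
    (by simpa using hN) (by simpa using hM)
  have hcol (x : Fin N) :
      ((redGraph χ).comap fun y : Y ↦ (x, (y : Fin M))).IndepSetFree n :=
    indepSetFree_comap_redGraph (f := (Function.Embedding.subtype _).trans (.sectR x (Fin M)))
      hblue fun _ _ h ↦ .inl ⟨rfl, Subtype.coe_injective.ne h⟩
  have hlt := card_lt_of_pairwiseDisjoint_of_indepSetFree ht
    (pairwiseDisjoint_comap_redGraph hrect hclique) (fun x _ ↦ hcol x) hst
  rw [Fintype.card_coe] at hlt
  omega

theorem hasRedRect_or_hasBlueGridClique_of_pow_le {t : ℕ} (hn : 2 ≤ n) (hnt : n ≤ t ^ 3)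
    (hN : n ^ (19 * t ^ 2) ≤ N) (hM : n ^ (19 * t ^ 2) ≤ M) (χ : Sym2 (Fin N × Fin M) → Bool) :
    HasRedRect N M χ ∨ HasBlueGridClique N M n χ := by
  have ht : 2 ≤ t := by
    by_contra! h
    have : t ^ 3 ≤ 1 ^ 3 := Nat.pow_le_pow_left (by omega) 3
    omega
  have hpow {k K : ℕ} (hk : k ≤ 19 * t ^ 2) (hK : n ^ (19 * t ^ 2) ≤ K) : n ^ k ≤ K :=
    (Nat.pow_le_pow_right (by omega) hk).trans hK
  refine hasRedRect_or_hasBlueGridClique (s := 8 * t ^ 2) (by omega) ht (by linarith)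
    (hpow (by nlinarith) hN) ?_ χ
  calc n ^ (t * t) * (4 * n ^ (2 * (8 * t ^ 2) + 3))
      ≤ n ^ (t * t) * (n ^ 2 * n ^ (2 * (8 * t ^ 2) + 3)) := by
        gcongr
        nlinarith
    _ = n ^ (17 * t ^ 2 + 5) := by ring
    _ ≤ M := hpow (by nlinarith) hM

theorem exists_le_pow_three_and_sq_le {n : ℕ} (hn : 1 ≤ n) :
    ∃ t : ℕ, n ≤ t ^ 3 ∧ (t : ℝ) ^ 2 ≤ 4 * (n : ℝ) ^ ((2 : ℝ) / 3) := by
  set a : ℝ := (n : ℝ) ^ ((1 : ℝ) / 3) with ha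
  have ha_one : 1 ≤ a := Real.one_le_rpow (by exact_mod_cast hn) (by norm_num)
  have ha_pow (k : ℕ) : a ^ k = (n : ℝ) ^ ((k : ℝ) / 3) := by
    rw [ha, ← Real.rpow_mul_natCast (by positivity), one_div_mul_eq_div]
  refine ⟨⌈a⌉₊, ?_, ?_⟩
  · have hcube : (n : ℝ) ≤ (⌈a⌉₊ : ℝ) ^ 3 :=
      calc (n : ℝ) = a ^ 3 := by simp [ha_pow]
        _ ≤ (⌈a⌉₊ : ℝ) ^ 3 := by gcongr; exact Nat.le_ceil a
    exact_mod_cast hcube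
  · calc (⌈a⌉₊ : ℝ) ^ 2 ≤ (2 * a) ^ 2 := by gcongr; exact Nat.ceil_le_two_mul (by linarith)
      _ = 4 * (n : ℝ) ^ ((2 : ℝ) / 3) := by rw [mul_pow, ha_pow]; norm_num

end

/-- There is `c' > 0` such that for all `n ≥ 2`,
`gr(Γ₂,₂, K_n) ≤ 2^(c' n^(2/3) log₂ n)`: if `N ≥ 2^(c' n^(2/3) log₂ n)` then every
red/blue edge-coloring of `Γ_{N,N}` contains a red rectangle or a blue `K_n`. -/
theorem upper_bound_grid_ramsey :
    ∃ c' : ℝ, 0 < c' ∧ ∀ n : ℕ, 2 ≤ n →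
      ∀ N : ℕ, (2 : ℝ) ^ (c' * (n : ℝ) ^ ((2 : ℝ) / 3) * Real.logb 2 n) ≤ N →
        ∀ χ : Sym2 (Fin N × Fin N) → Bool,
          HasRedRect N N χ ∨ HasBlueGridClique N N n χ := by
  refine ⟨76, by norm_num, fun n hn N hN χ ↦ ?_⟩
  have hn_one : (1 : ℝ) ≤ n := by exact_mod_cast one_le_two.trans hn
  obtain ⟨t, hcube, hsq⟩ := exists_le_pow_three_and_sq_le (one_le_two.trans hn)
  have hexp : ((19 * t ^ 2 : ℕ) : ℝ) ≤ 76 * (n : ℝ) ^ ((2 : ℝ) / 3) := by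
    push_cast
    linarith
  have hpow : (n : ℝ) ^ (19 * t ^ 2) ≤ N :=
    calc (n : ℝ) ^ (19 * t ^ 2) = (n : ℝ) ^ ((19 * t ^ 2 : ℕ) : ℝ) := (Real.rpow_natCast _ _).symm
      _ ≤ (n : ℝ) ^ (76 * (n : ℝ) ^ ((2 : ℝ) / 3)) := Real.rpow_le_rpow_of_exponent_le hn_one hexp
      _ = 2 ^ (76 * (n : ℝ) ^ ((2 : ℝ) / 3) * Real.logb 2 n) := by
        rw [mul_comm _ (Real.logb 2 n), Real.rpow_mul zero_le_two,
          Real.rpow_logb two_pos (by norm_num) (by linarith)]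
      _ ≤ N := hN
  have hpow' : n ^ (19 * t ^ 2) ≤ N := by exact_mod_cast hpow
  exact hasRedRect_or_hasBlueGridClique_of_pow_le hn hcube hpow' hpow' χ
end

section
/- Let N and n be positive integers such that every red/blue coloring of the edges of the complete graph K_N contains a red triangle or a blue clique K_n. Then every 2-coloring of K_{N+1}^(3) contains a red copy of K_4^(3) − e or a blue copy of S_n. Consequently, r(K_4^(3) − e, S_n) ≤ r(K_3, K_n) + 1. -/
/-- A red triangle in an edge-coloring of `K_N` (red = `true`). -/
def HasRedTriangle (N : ℕ) (χ : Sym2 (Fin N) → Bool) : Prop :=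
  ∃ a b c : Fin N, a ≠ b ∧ a ≠ c ∧ b ≠ c ∧
    χ s(a, b) = true ∧ χ s(a, c) = true ∧ χ s(b, c) = true

/-- A blue `K_n` in an edge-coloring of `K_N` (blue = `false`). -/
def HasBlueClique (N n : ℕ) (χ : Sym2 (Fin N) → Bool) : Prop :=
  ∃ S : Finset (Fin N), S.card = n ∧ ∀ a ∈ S, ∀ b ∈ S, a ≠ b → χ s(a, b) = false

/-- A red copy of `K₄⁽³⁾ − e`: a 4-element vertex set with at least three of its four
3-element subsets red (red = `true`). -/
def HasRedK4e (N : ℕ) (χ : Finset (Fin N) → Bool) : Prop :=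
  ∃ S : Finset (Fin N), S.card = 4 ∧
    3 ≤ ((S.powersetCard 3).filter fun T => χ T = true).card

/-- A blue copy of the star `Sₙ` (blue = `false`). -/
def HasBlueStar (N n : ℕ) (χ : Finset (Fin N) → Bool) : Prop :=
  ∃ v : Fin N, ∃ S : Finset (Fin N), v ∉ S ∧ S.card = n ∧
    ∀ a ∈ S, ∀ b ∈ S, a ≠ b → χ {v, a, b} = false

/-- The graph Ramsey number `r(K₃, K_n)`. -/
noncomputable def graphRamsey3 (n : ℕ) : ℕ :=
  sInf {N : ℕ | ∀ χ : Sym2 (Fin N) → Bool, HasRedTriangle N χ ∨ HasBlueClique N n χ}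

/-- The Ramsey number `r(K₄⁽³⁾ − e, Sₙ)`. -/
noncomputable def ramseyK4eStar (n : ℕ) : ℕ :=
  sInf {N : ℕ | ∀ χ : Finset (Fin N) → Bool, HasRedK4e N χ ∨ HasBlueStar N n χ}

/-!
Fix a vertex `v` of the hypergraph and colour a pair `{a, b}` of other vertices with the colour of
the triple `{v, a, b}`. A red triangle `abc` of this link graph gives three red triples inside
`{v, a, b, c}`, and a blue clique of the link graph is the leaf set of a blue star centred at `v`.
-/

theorem card_le_card_filter_powersetCard_of_erase {V : Type*} [DecidableEq V] {k : ℕ}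
    {R S : Finset V} {p : Finset V → Prop} [DecidablePred p] (hS : S.card = k + 1) (hRS : R ⊆ S)
    (hp : ∀ x ∈ R, p (S.erase x)) : R.card ≤ ((S.powersetCard k).filter p).card := by
  refine Finset.card_le_card_of_injOn S.erase (fun x hx => ?_) (S.erase_injOn.mono hRS)
  have hcard : (S.erase x).card = k := by rw [Finset.card_erase_of_mem (hRS hx), hS]; rfl
  exact Finset.mem_filter.mpr
    ⟨Finset.mem_powersetCard.mpr ⟨S.erase_subset x, hcard⟩, hp x hx⟩

/-- The link of the vertex `v` in the triple colouring `χ`, as an edge colouring: a pair receives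
the colour of the triple it forms with `v`. The link lives on the other vertices, so the pair is
read through a labelling `f` of vertices; this makes the link a colouring of `K_N` when
`W = Fin N`. -/
def linkColoring {V W : Type*} [DecidableEq V] (χ : Finset V → Bool) (v : V) (f : W → V)
    (e : Sym2 W) : Bool :=
  χ (insert v (e.map f).toFinset)

@[simp]
theorem linkColoring_mk {V W : Type*} [DecidableEq V] (χ : Finset V → Bool) (v : V) (f : W → V)
    (a b : W) : linkColoring χ v f s(a, b) = χ {v, f a, f b} := by
  simp only [linkColoring, Sym2.map_mk, Sym2.toFinset_mk_eq]

section Link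

variable {M N n : ℕ} {χ : Finset (Fin M) → Bool} {v : Fin M} {f : Fin N ↪ Fin M}

theorem HasRedTriangle.hasRedK4e_of_linkColoring (hv : v ∉ Set.range f)
    (h : HasRedTriangle N (linkColoring χ v f)) : HasRedK4e M χ := by
  obtain ⟨a, b, c, hab, hac, hbc, red_ab, red_ac, red_bc⟩ := h
  rw [linkColoring_mk] at red_ab red_ac red_bc
  have hva (x : Fin N) : v ≠ f x := fun hx => hv ⟨x, hx.symm⟩
  have hfab : f a ≠ f b := f.injective.ne hab
  have hfac : f a ≠ f c := f.injective.ne hac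
  have hfbc : f b ≠ f c := f.injective.ne hbc
  have htriangle : ({f a, f b, f c} : Finset (Fin M)).card = 3 :=
    Finset.card_eq_three.mpr ⟨_, _, _, hfab, hfac, hfbc, rfl⟩
  have hcard : ({v, f a, f b, f c} : Finset (Fin M)).card = 3 + 1 := by
    rw [Finset.card_insert_of_notMem (by simp [hva]), htriangle]
  refine ⟨{v, f a, f b, f c}, hcard, htriangle.ge.trans <|
    card_le_card_filter_powersetCard_of_erase hcard (Finset.subset_insert _ _) ?_⟩
  have erase_a : ({v, f a, f b, f c} : Finset (Fin M)).erase (f a) = {v, f b, f c} := by grind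
  have erase_b : ({v, f a, f b, f c} : Finset (Fin M)).erase (f b) = {v, f a, f c} := by grind
  have erase_c : ({v, f a, f b, f c} : Finset (Fin M)).erase (f c) = {v, f a, f b} := by grind
  simp only [Finset.mem_insert, Finset.mem_singleton, forall_eq_or_imp, forall_eq, erase_a,
    erase_b, erase_c]
  exact ⟨red_bc, red_ac, red_ab⟩

theorem HasBlueClique.hasBlueStar_of_linkColoring (hv : v ∉ Set.range f)
    (h : HasBlueClique N n (linkColoring χ v f)) : HasBlueStar M n χ := by
  obtain ⟨S, hS, blue⟩ := h
  refine ⟨v, S.map f, fun hvS => ?_, by rw [Finset.card_map, hS], ?_⟩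
  · obtain ⟨a, -, rfl⟩ := Finset.mem_map.mp hvS
    exact hv ⟨a, rfl⟩
  · simp only [Finset.forall_mem_map, ← linkColoring_mk]
    exact fun a ha b hb hab => blue a ha b hb (ne_of_apply_ne f hab)

end Link

theorem hasRedK4e_or_hasBlueStar_succ {N n : ℕ}
    (h : ∀ χ : Sym2 (Fin N) → Bool, HasRedTriangle N χ ∨ HasBlueClique N n χ)
    (χ : Finset (Fin (N + 1)) → Bool) : HasRedK4e (N + 1) χ ∨ HasBlueStar (N + 1) n χ := by
  have hzero : (0 : Fin (N + 1)) ∉ Set.range (Fin.succEmb N) := by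
    rintro ⟨a, ha⟩
    exact Fin.succ_ne_zero a ha
  exact (h (linkColoring χ 0 (Fin.succEmb N))).imp
    (·.hasRedK4e_of_linkColoring hzero) (·.hasBlueStar_of_linkColoring hzero)

/-- If every red/blue edge-coloring of `K_N` contains a red triangle or a blue `K_n`,
then every 2-coloring of `K_{N+1}^(3)` contains a red `K₄⁽³⁾ − e` or a blue `Sₙ`.
Consequently, `r(K₄⁽³⁾ − e, Sₙ) ≤ r(K₃, K_n) + 1`. -/
theorem K4e_star_le_triangle_ramsey (N n : ℕ) (hN : 0 < N) (hn : 0 < n)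
    (h : ∀ χ : Sym2 (Fin N) → Bool, HasRedTriangle N χ ∨ HasBlueClique N n χ) :
    (∀ χ : Finset (Fin (N + 1)) → Bool,
      HasRedK4e (N + 1) χ ∨ HasBlueStar (N + 1) n χ) ∧
    ramseyK4eStar n ≤ graphRamsey3 n + 1 := by
  have hmem : graphRamsey3 n ∈
      {N : ℕ | ∀ χ : Sym2 (Fin N) → Bool, HasRedTriangle N χ ∨ HasBlueClique N n χ} :=
    Nat.sInf_mem ⟨N, h⟩
  exact ⟨hasRedK4e_or_hasBlueStar_succ h, Nat.sInf_le (hasRedK4e_or_hasBlueStar_succ hmem)⟩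
end
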